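/- arXiv:1712.01542 — 2 statements merged into one kernel-verified Lean document; each statement's English description precedes it below -/
import Mathlib

section
/- The Lie algebra L_{5,5} over any field F, with basis x₁,…,x₅ and nonzero brackets [x₁,x₂] = x₃, [x₁,x₃] = x₅, [x₂,x₄] = x₅, is capable. -/
open Module

universe u

/-- A witness to the capability of a Lie algebra `L` over `F`: a Lie algebra `E`
together with an isomorphism `L ≃ E ⧸ Z(E)`. -/
structure CapableWitness (F : Type u) (L : Type u) [Field F] [LieRing L] [LieAlgebra F L] where
  carrier : Type u
  [lieRing : LieRing carrier]
  [lieAlgebra : LieAlgebra F carrier]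
  equiv : L ≃ₗ⁅F⁆ (carrier ⧸ LieAlgebra.center F carrier)

/-- A Lie algebra `L` over a field `F` is capable if there exists a Lie algebra `E` over `F`
with `L ≅ E ⧸ Z(E)`. -/
def IsCapable (F : Type u) (L : Type u) [Field F] [LieRing L] [LieAlgebra F L] : Prop :=
  Nonempty (CapableWitness F L)

/-- `L` is isomorphic to `L_{5,5}`: basis `x₁,…,x₅` with `[x₁,x₂]=x₃`, `[x₁,x₃]=x₅`, `[x₂,x₄]=x₅`. -/
def IsL55 (F : Type u) (L : Type u) [Field F] [LieRing L] [LieAlgebra F L] : Prop :=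
  ∃ b : Basis (Fin 5) F L,
    ⁅b 0, b 1⁆ = b 2 ∧
    ⁅b 0, b 2⁆ = b 4 ∧
    ⁅b 1, b 3⁆ = b 4 ∧
    ∀ i j : Fin 5, i < j → (i, j) ≠ (0, 1) → (i, j) ≠ (0, 2) → (i, j) ≠ (1, 3) → ⁅b i, b j⁆ = 0

/-!
A 2-cocycle `c` on `L` with trivial coefficients `M` gives a central extension of `L` by `M`. Its
center is exactly `M` as soon as no nonzero central element of `L` lies in the radical of `c`, and
then `L` is the quotient of the extension by its center.

For `L_{5,5}`, with dual basis `eᵢ`, take `c = e₁ ∧ e₅ + e₃ ∧ e₄`. Up to sign `de₃ = e₁ ∧ e₂` and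
`de₅ = e₁ ∧ e₃ + e₂ ∧ e₄`, while `e₁`, `e₂`, `e₄` are closed, so `d(e₁ ∧ e₅)` and `d(e₃ ∧ e₄)` are
opposite multiples of `e₁ ∧ e₂ ∧ e₄`. The radical of `c` is spanned by `x₂`, which is not central
since `[x₁, x₂] = x₃`.
-/

universe v

open LieAlgebra LieModule.Cohomology

lemma nonempty_lieEquiv_quotient_of_ker_eq {R E L : Type*} [CommRing R] [LieRing E]
    [LieAlgebra R E] [LieRing L] [LieAlgebra R L] {I : LieIdeal R E} (f : E →ₗ⁅R⁆ L)
    (hf : Function.Surjective f) (hI : f.ker = I) : Nonempty (L ≃ₗ⁅R⁆ E ⧸ I) := by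
  subst hI
  have hrange : f.range = ⊤ := f.range_eq_top.mpr hf
  exact ⟨(f.quotKerEquivRange.trans
    ((LieEquiv.ofEq _ _ (congrArg _ hrange)).trans LieSubalgebra.topEquiv)).symm⟩

section CentralExtension

variable {R L M : Type*} [CommRing R] [LieRing L] [LieAlgebra R L] [AddCommGroup M] [Module R M]
  [LieRingModule L M] [LieModule R L M] (c : twoCocycle R L M)

/-- The projection onto `L` of its extension by a 2-cocycle. Unlike
`LieAlgebra.Extension.ofTwoCocycle`, it does not ask for a Lie bracket on the coefficients. -/
def ofTwoCocycleProj : ofTwoCocycle c →ₗ⁅R⁆ L where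
  toFun x := ((ofProd c).symm x).1
  map_add' _ _ := rfl
  map_smul' _ _ := rfl
  map_lie' := rfl

lemma ofTwoCocycleProj_apply (x : ofTwoCocycle c) :
    ofTwoCocycleProj c x = ((ofProd c).symm x).1 :=
  rfl

lemma ofTwoCocycleProj_surjective : Function.Surjective (ofTwoCocycleProj c) :=
  fun x ↦ ⟨ofProd c (x, 0), rfl⟩

variable [LieModule.IsTrivial L M]

lemma mem_center_ofTwoCocycle_iff {x : ofTwoCocycle c} :
    x ∈ center R (ofTwoCocycle c) ↔
      ofTwoCocycleProj c x ∈ center R L ∧ ∀ y, c.1 y (ofTwoCocycleProj c x) = 0 := by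
  have lie_eq_zero_iff (y : ofTwoCocycle c) : ⁅y, x⁆ = 0 ↔
      ⁅ofTwoCocycleProj c y, ofTwoCocycleProj c x⁆ = 0 ∧
        c.1 (ofTwoCocycleProj c y) (ofTwoCocycleProj c x) = 0 := by
    rw [bracket_ofTwoCocycle, ← of_zero, (ofProd c).apply_eq_iff_eq]
    simp [trivial_lie_zero, ofTwoCocycleProj_apply]
  simp only [LieModule.mem_maxTrivSubmodule, lie_eq_zero_iff, forall_and,
    (ofTwoCocycleProj_surjective c).forall]

lemma ker_ofTwoCocycleProj_eq_center
    (h : ∀ z ∈ center R L, (∀ y, c.1 y z = 0) → z = 0) :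
    (ofTwoCocycleProj c).ker = center R (ofTwoCocycle c) := by
  ext x
  rw [LieHom.mem_ker, mem_center_ofTwoCocycle_iff]
  refine ⟨fun hx ↦ ?_, fun hx ↦ h _ hx.1 hx.2⟩
  simp [hx]

lemma nonempty_lieEquiv_ofTwoCocycle_quotient_center
    (h : ∀ z ∈ center R L, (∀ y, c.1 y z = 0) → z = 0) :
    Nonempty (L ≃ₗ⁅R⁆ ofTwoCocycle c ⧸ center R (ofTwoCocycle c)) :=
  nonempty_lieEquiv_quotient_of_ker_eq _ (ofTwoCocycleProj_surjective c)
    (ker_ofTwoCocycleProj_eq_center c h)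

end CentralExtension

section Wedge

variable {R L : Type*} [CommRing R] [LieRing L] [LieAlgebra R L]

/-- The wedge product `f ∧ g` of two linear forms, as a 2-cochain with trivial coefficients. -/
def wedge (f g : Dual R L) : twoCochain R L (TrivialLieModule R L R) where
  val := (LinearMap.BilinForm.linMulLin f g - LinearMap.BilinForm.linMulLin g f).compr₂
    (TrivialLieModule.equiv R L R).symm
  property x := by simp [mul_comm]

lemma wedge_apply (f g : Dual R L) (x y : L) :
    wedge f g x y = (TrivialLieModule.equiv R L R).symm (f x * g y - g x * f y) :=
  rfl

end Wedge

/-- The bracket relations of `L_{5,5}` in the basis `b`, with `b i` standing for `xᵢ₊₁`. These are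
the relations of `IsL55`, over any commutative ring. -/
def IsL55Basis {R L : Type*} [CommRing R] [LieRing L] [LieAlgebra R L]
    (b : Basis (Fin 5) R L) : Prop :=
  ⁅b 0, b 1⁆ = b 2 ∧
  ⁅b 0, b 2⁆ = b 4 ∧
  ⁅b 1, b 3⁆ = b 4 ∧
  ∀ i j : Fin 5, i < j → (i, j) ≠ (0, 1) → (i, j) ≠ (0, 2) → (i, j) ≠ (1, 3) → ⁅b i, b j⁆ = 0

namespace IsL55Basis

variable {R L : Type*} [CommRing R] [LieRing L] [LieAlgebra R L] {b : Basis (Fin 5) R L}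

lemma lie_eq (hb : IsL55Basis b) (x y : L) :
    ⁅x, y⁆ = (b.coord 0 x * b.coord 1 y - b.coord 1 x * b.coord 0 y) • b 2 +
      (b.coord 0 x * b.coord 2 y - b.coord 2 x * b.coord 0 y +
        (b.coord 1 x * b.coord 3 y - b.coord 3 x * b.coord 1 y)) • b 4 := by
  obtain ⟨h01, h02, h13, h⟩ := hb
  have h03 : ⁅b 0, b 3⁆ = 0 := h 0 3 (by decide) (by decide) (by decide) (by decide)
  have h04 : ⁅b 0, b 4⁆ = 0 := h 0 4 (by decide) (by decide) (by decide) (by decide)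
  have h12 : ⁅b 1, b 2⁆ = 0 := h 1 2 (by decide) (by decide) (by decide) (by decide)
  have h14 : ⁅b 1, b 4⁆ = 0 := h 1 4 (by decide) (by decide) (by decide) (by decide)
  have h23 : ⁅b 2, b 3⁆ = 0 := h 2 3 (by decide) (by decide) (by decide) (by decide)
  have h24 : ⁅b 2, b 4⁆ = 0 := h 2 4 (by decide) (by decide) (by decide) (by decide)
  have h34 : ⁅b 3, b 4⁆ = 0 := h 3 4 (by decide) (by decide) (by decide) (by decide)
  have skew {i j : Fin 5} {z : L} (hij : ⁅b i, b j⁆ = z) : ⁅b j, b i⁆ = -z := by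
    rw [← hij, lie_skew]
  conv_lhs => rw [← b.sum_repr x, ← b.sum_repr y]
  simp only [Fin.sum_univ_five, Basis.coord_apply, lie_add, add_lie, lie_smul, smul_lie, lie_self,
    h01, h02, h03, h04, h12, h13, h14, h23, h24, h34, skew h01, skew h02, skew h03, skew h04,
    skew h12, skew h13, skew h14, skew h23, skew h24, skew h34]
  module

lemma coord_two_lie (hb : IsL55Basis b) (x y : L) :
    b.coord 2 ⁅x, y⁆ = b.coord 0 x * b.coord 1 y - b.coord 1 x * b.coord 0 y := by
  simp [hb.lie_eq x y]

lemma coord_four_lie (hb : IsL55Basis b) (x y : L) :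
    b.coord 4 ⁅x, y⁆ = b.coord 0 x * b.coord 2 y - b.coord 2 x * b.coord 0 y +
      (b.coord 1 x * b.coord 3 y - b.coord 3 x * b.coord 1 y) := by
  simp [hb.lie_eq x y]

lemma coord_lie_eq_zero (hb : IsL55Basis b) {i : Fin 5} (hi₂ : i ≠ 2) (hi₄ : i ≠ 4) (x y : L) :
    b.coord i ⁅x, y⁆ = 0 := by
  simp [hb.lie_eq x y, hi₂.symm, hi₄.symm]

/-- The 2-cocycle `e₁ ∧ e₅ + e₃ ∧ e₄` on `L_{5,5}`, where `eᵢ` is the basis dual to `xᵢ`. -/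
noncomputable def cocycle (hb : IsL55Basis b) : twoCocycle R L (TrivialLieModule R L R) where
  val := wedge (b.coord 0) (b.coord 4) + wedge (b.coord 2) (b.coord 3)
  property := by
    rw [mem_twoCocycle_iff_of_trivial]
    intro x y z
    simp only [add_apply_apply, wedge_apply, ← map_add, hb.coord_two_lie, hb.coord_four_lie,
      hb.coord_lie_eq_zero (i := 0) (by decide) (by decide),
      hb.coord_lie_eq_zero (i := 3) (by decide) (by decide)]
    congr 1
    ring

lemma cocycle_apply (hb : IsL55Basis b) (x y : L) :
    hb.cocycle.1 x y = (TrivialLieModule.equiv R L R).symm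
      (b.coord 0 x * b.coord 4 y - b.coord 4 x * b.coord 0 y +
        (b.coord 2 x * b.coord 3 y - b.coord 3 x * b.coord 2 y)) :=
  rfl

lemma eq_zero_of_mem_center_of_cocycle_eq_zero (hb : IsL55Basis b) {z : L}
    (hz : z ∈ center R L) (hc : ∀ y, hb.cocycle.1 y z = 0) : z = 0 := by
  simp only [hb.cocycle_apply, LinearEquiv.map_eq_zero_iff] at hc
  have hz₀ : b.coord 0 z = 0 := by simpa [Finsupp.single_apply] using hc (b 4)
  have hz₁ : b.coord 1 z = 0 := by
    simpa [hz (b 0), Finsupp.single_apply] using (hb.coord_two_lie (b 0) z).symm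
  have hz₂ : b.coord 2 z = 0 := by simpa [Finsupp.single_apply] using hc (b 3)
  have hz₃ : b.coord 3 z = 0 := by simpa [Finsupp.single_apply] using hc (b 2)
  have hz₄ : b.coord 4 z = 0 := by simpa [Finsupp.single_apply] using hc (b 0)
  refine b.forall_coord_eq_zero_iff.mp fun i ↦ ?_
  fin_cases i <;> assumption

end IsL55Basis

theorem L55_isCapable_general {R : Type u} {L : Type v} [CommRing R] [LieRing L]
    [LieAlgebra R L] {b : Basis (Fin 5) R L} (hb : IsL55Basis b) :
    ∃ (E : Type (max u v)) (_ : LieRing E) (_ : LieAlgebra R E),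
      Nonempty (L ≃ₗ⁅R⁆ E ⧸ center R E) :=
  ⟨ofTwoCocycle hb.cocycle, inferInstance, inferInstance,
    nonempty_lieEquiv_ofTwoCocycle_quotient_center _
      fun _ ↦ hb.eq_zero_of_mem_center_of_cocycle_eq_zero⟩

/-- The Lie algebra `L_{5,5}` over any field is capable. -/
theorem L55_isCapable
    (F L : Type u) [Field F] [LieRing L] [LieAlgebra F L]
    (h : IsL55 F L) :
    IsCapable F L := by
  obtain ⟨b, hb⟩ := h
  obtain ⟨E, _, _, ⟨e⟩⟩ := L55_isCapable_general (b := b) hb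
  exact ⟨⟨E, e⟩⟩
end

section
/- Let L be a 7-dimensional Lie algebra over an arbitrary field F which is a generalized Heisenberg Lie algebra of rank 2, i.e. [L,L] = Z(L) and dim [L,L] = 2. Then L is isomorphic to L₁ or to L₂. -/
open Module

universe u

/-- `L` is isomorphic to `L₁ = 27A`: basis `x₁,…,x₇` with `[x₁,x₂]=x₆=[x₃,x₄]`, `[x₁,x₅]=x₇=[x₂,x₃]`. -/
def IsL1 (F : Type u) (L : Type u) [Field F] [LieRing L] [LieAlgebra F L] : Prop :=
  ∃ b : Basis (Fin 7) F L,
    ⁅b 0, b 1⁆ = b 5 ∧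
    ⁅b 2, b 3⁆ = b 5 ∧
    ⁅b 0, b 4⁆ = b 6 ∧
    ⁅b 1, b 2⁆ = b 6 ∧
    ∀ i j : Fin 7, i < j → (i, j) ≠ (0, 1) → (i, j) ≠ (2, 3) → (i, j) ≠ (0, 4) → (i, j) ≠ (1, 2) → ⁅b i, b j⁆ = 0

/-- `L` is isomorphic to `L₂ = 27B`: basis `x₁,…,x₇` with `[x₁,x₂]=x₆`, `[x₁,x₄]=x₇=[x₃,x₅]`. -/
def IsL2 (F : Type u) (L : Type u) [Field F] [LieRing L] [LieAlgebra F L] : Prop :=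
  ∃ b : Basis (Fin 7) F L,
    ⁅b 0, b 1⁆ = b 5 ∧
    ⁅b 0, b 3⁆ = b 6 ∧
    ⁅b 2, b 4⁆ = b 6 ∧
    ∀ i j : Fin 7, i < j → (i, j) ≠ (0, 1) → (i, j) ≠ (0, 3) → (i, j) ≠ (2, 4) → ⁅b i, b j⁆ = 0

/-!
On a complement `U` of `[L, L] = Z(L)` the bracket is an alternating map `U × U → [L, L]` with
`dim U = 5`. Composing it with the functionals on `[L, L]` gives a two-dimensional space of
alternating forms on `U`, none of which is zero except the trivial one (as the brackets span
`[L, L]`) and which have no common radical (as `U` meets `Z(L)` trivially). Alternating forms have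
even rank, so each nonzero member has rank `2` or `4`.

If some member `A` has rank `2`, take another member `B`. It cannot vanish on the three-dimensional
radical of `A`, which therefore carries a hyperbolic pair of `B` and a vector orthogonal to the
radical. Completing these three vectors to a basis gives `L₂`.

If every nonzero member has rank `4`, choose two members `A`, `B` with radicals spanned by `u` and
`w`. Then `B u = A z` and `A w = B z'`; a dimension count shows that, after rescaling `u`, one can
take `z = z'`. This is a Kronecker chain `u, z, w`, and vectors dual to `B u` and `A w` complete it
to a basis giving `L₁`.
-/

open LinearMap (ker range IsAlt)

variable {F V W : Type*} [Field F] [AddCommGroup V] [Module F V] [AddCommGroup W] [Module F W]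

lemma exists_apply_apply_eq_one {A : V →ₗ[F] V →ₗ[F] F} (hA : A ≠ 0) : ∃ p q, A p q = 1 := by
  obtain ⟨p, hp⟩ := DFunLike.ne_iff.mp hA
  exact ⟨p, LinearMap.surjective hp 1⟩

lemma exists_orthogonal_add_smul_add_smul {A : V →ₗ[F] V →ₗ[F] F} (hA : A.IsAlt) {p q : V}
    (hpq : A p q = 1) (x : V) :
    ∃ s t : F, A (x + s • p + t • q) p = 0 ∧ A (x + s • p + t • q) q = 0 := by
  have hqp : A q p = -1 := by rw [← hA.neg, hpq]
  exact ⟨-A x q, A x p, by simp [hA.self_eq_zero, hqp], by simp [hA.self_eq_zero, hpq]⟩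

lemma map_subtype_ker_domRestrict₁₂_eq_ker {A : V →ₗ[F] V →ₗ[F] F} (hA : A.IsAlt) {p q : V}
    (hpq : A p q = 1) {U : Submodule F V} (hU : U = ker (A p) ⊓ ker (A q)) :
    (ker (A.domRestrict₁₂ U U)).map U.subtype = ker A := by
  ext x
  constructor
  · rintro ⟨⟨x, hxU⟩, hx, rfl⟩
    have hxpq : A p x = 0 ∧ A q x = 0 := by simpa [hU] using hxU
    have hxp : A x p = 0 := by rw [← hA.neg, hxpq.1, neg_zero]
    have hxq : A x q = 0 := by rw [← hA.neg, hxpq.2, neg_zero]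
    ext y
    obtain ⟨s, t, hp, hq⟩ := exists_orthogonal_add_smul_add_smul hA hpq y
    have hy : y + s • p + t • q ∈ U := by
      simpa [hU] using And.intro (hA.eq_iff.mp hp) (hA.eq_iff.mp hq)
    have hxy : A x (y + s • p + t • q) = 0 := LinearMap.congr_fun hx ⟨_, hy⟩
    simpa [hxp, hxq] using hxy
  · intro hx
    have hx0 : ∀ y, A x y = 0 := LinearMap.congr_fun hx
    have hxU : x ∈ U := by simp [hU, hA.eq_iff (y := x), hx0]
    exact ⟨⟨x, hxU⟩, by ext y; exact hx0 y, rfl⟩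

section FiniteDimensional

variable [FiniteDimensional F V]

lemma finrank_ker_inf_ker_add_two {A : V →ₗ[F] V →ₗ[F] F} (hA : A.IsAlt) {p q : V}
    (hpq : A p q = 1) : finrank F ↥(ker (A p) ⊓ ker (A q)) + 2 = finrank F V := by
  have hqp : A q p = -1 := by rw [← hA.neg, hpq]
  have hsurj : range ((A p).prod (A q)) = ⊤ := by
    refine LinearMap.range_eq_top.mpr ?_
    rintro ⟨a, b⟩
    exact ⟨a • q - b • p, by simp [hpq, hqp, hA.self_eq_zero]⟩
  have hrank := ((A p).prod (A q)).finrank_range_add_finrank_ker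
  rw [hsurj, finrank_top, finrank_prod, finrank_self, LinearMap.ker_prod] at hrank
  lia

lemma even_finrank_range_of_isAlt {A : V →ₗ[F] V →ₗ[F] F} (hA : A.IsAlt) :
    Even (finrank F (range A)) := by
  induction hn : finrank F V using Nat.strong_induction_on generalizing V with
  | _ n ih =>
    obtain rfl | hA0 := eq_or_ne A 0
    · rw [LinearMap.range_zero, finrank_bot]
      exact Even.zero
    obtain ⟨p, q, hpq⟩ := exists_apply_apply_eq_one hA0
    obtain ⟨U, hU⟩ : ∃ U, U = ker (A p) ⊓ ker (A q) := ⟨_, rfl⟩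
    have hdim : finrank F U + 2 = n := by rw [hU, finrank_ker_inf_ker_add_two hA hpq, hn]
    have hker : finrank F (ker (A.domRestrict₁₂ U U)) = finrank F (ker A) := by
      rw [← map_subtype_ker_domRestrict₁₂_eq_ker hA hpq hU, Submodule.finrank_map_subtype_eq]
    have heven := ih (finrank F U) (by lia) (A := A.domRestrict₁₂ U U) (fun x ↦ hA x) rfl
    have hrankA := A.finrank_range_add_finrank_ker
    have hrankU := (A.domRestrict₁₂ U U).finrank_range_add_finrank_ker
    rw [show finrank F (range A) = finrank F (range (A.domRestrict₁₂ U U)) + 2 by lia]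
    exact heven.add even_two

lemma exists_ne_zero_apply_eq_zero_of_odd_finrank {A : V →ₗ[F] V →ₗ[F] F} (hA : A.IsAlt)
    (hV : Odd (finrank F V)) : ∃ x ≠ 0, A x = 0 := by
  have hker : ker A ≠ ⊥ := fun hbot ↦ by
    have hrank := A.finrank_range_add_finrank_ker
    rw [hbot, finrank_bot, add_zero] at hrank
    exact Nat.not_even_iff_odd.mpr hV (hrank ▸ even_finrank_range_of_isAlt hA)
  obtain ⟨x, hx, hx0⟩ := Submodule.exists_mem_ne_zero_of_ne_bot hker
  exact ⟨x, hx0, hx⟩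

lemma exists_apply_eq_of_ker_le_ker {A : V →ₗ[F] V →ₗ[F] F} (hA : A.IsAlt) {f : Dual F V}
    (hf : ker A ≤ ker f) : ∃ x, A x = f := by
  have hmem : f ∈ (ker A).dualAnnihilator :=
    (Submodule.mem_dualAnnihilator f).mpr fun x hx ↦ hf hx
  rw [LinearMap.dualAnnihilator_ker_eq_range_flip] at hmem
  obtain ⟨x, rfl⟩ := hmem
  exact ⟨-x, by ext y; simp [hA.neg]⟩

lemma finrank_map_add_finrank_inf_ker (f : V →ₗ[F] W) (U : Submodule F V) :
    finrank F (U.map f) + finrank F ↥(U ⊓ ker f) = finrank F U := by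
  rw [← (f.domRestrict U).finrank_range_add_finrank_ker, LinearMap.range_domRestrict,
    LinearMap.ker_domRestrict, ← Submodule.finrank_map_subtype_eq U,
    Submodule.map_comap_subtype]

lemma two_mul_finrank_le_of_isotropic {A : V →ₗ[F] V →ₗ[F] F} {U : Submodule F V}
    (hU : ∀ x ∈ U, ∀ y ∈ U, A x y = 0) :
    2 * finrank F U ≤ finrank F V + finrank F ↥(U ⊓ ker A) := by
  have hle : U.map A ≤ U.dualAnnihilator := by
    rintro _ ⟨x, hx, rfl⟩
    exact (Submodule.mem_dualAnnihilator _).mpr (hU x hx)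
  have hmap := Submodule.finrank_mono hle
  have hker := finrank_map_add_finrank_inf_ker A U
  have hann := Subspace.finrank_add_finrank_dualAnnihilator_eq U
  lia

lemma exists_forall_apply_eq_of_linearIndependent {ι : Type*} {f : ι → Dual F V}
    (hf : LinearIndependent F f) (c : ι → F) : ∃ x, ∀ i, f i x = c i := by
  obtain ⟨φ, hφ⟩ := ((Basis.span hf).constr F c).exists_extend
  refine ⟨(evalEquiv F V).symm φ, fun i ↦ ?_⟩
  have hi := LinearMap.congr_fun hφ (Basis.span hf i)
  rw [Basis.constr_basis] at hi
  simpa [Basis.span_apply] using hi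

lemma exists_basis_coord_zero_eq {n : ℕ} {φ : Dual F V} (hφ : φ ≠ 0)
    (hV : finrank F V = n + 1) : ∃ b : Basis (Fin (n + 1)) F V, b.coord 0 = φ := by
  have hker : finrank F (ker φ) = n := by
    have := Dual.finrank_ker_add_one_of_ne_zero hφ
    lia
  obtain ⟨v, hv⟩ := LinearMap.surjective hφ 1
  let k := finBasisOfFinrankEq F (ker φ) hker
  let b := Basis.mkFinCons v k
    (fun c x hx h ↦ by simpa [hv, LinearMap.mem_ker.mp hx] using congrArg φ h)
    (fun z ↦ ⟨-φ z, by simp [hv]⟩)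
  have hb0 : b 0 = v := by simp [b]
  have hbs (j : Fin n) : b j.succ = k j := by simp [b]
  refine ⟨b, b.ext fun i ↦ ?_⟩
  cases i using Fin.cases with
  | zero => rw [Basis.coord_apply, Basis.repr_self, hb0, hv, Finsupp.single_eq_same]
  | succ j =>
    rw [Basis.coord_apply, Basis.repr_self, hbs, Finsupp.single_eq_of_ne (Fin.succ_ne_zero j).symm]
    exact (k j).2.symm

end FiniteDimensional

lemma exists_basis_of_isCompl {m n : ℕ} {U K : Submodule F V} (hUK : IsCompl U K)
    (e : Basis (Fin m) F U) (ζ : Basis (Fin n) F K) :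
    ∃ b : Basis (Fin (m + n)) F V,
      (∀ i, b (Fin.castAdd n i) = e i) ∧ ∀ k, b (Fin.natAdd m k) = ζ k :=
  ⟨((e.prod ζ).map (Submodule.prodEquivOfIsCompl U K hUK)).reindex finSumFinEquiv,
    by simp, by simp⟩

/-- The matrices `(c_{ij}^k)_{i,j}` of the structure constants of `L₁`, that is
`[x_i, x_j] = ∑ k, c_{ij}^k x_{5+k}` for the generators `x₀, …, x₄`, indices starting at `0`. -/
def structureConstantsL1 (F : Type*) [Field F] : Fin 2 → Matrix (Fin 5) (Fin 5) F :=
  ![!![0, 1, 0, 0, 0; -1, 0, 0, 0, 0; 0, 0, 0, 1, 0; 0, 0, -1, 0, 0; 0, 0, 0, 0, 0],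
    !![0, 0, 0, 0, 1; 0, 0, 1, 0, 0; 0, -1, 0, 0, 0; 0, 0, 0, 0, 0; -1, 0, 0, 0, 0]]

/-- The analogue of `structureConstantsL1` for `L₂`. -/
def structureConstantsL2 (F : Type*) [Field F] : Fin 2 → Matrix (Fin 5) (Fin 5) F :=
  ![!![0, 1, 0, 0, 0; -1, 0, 0, 0, 0; 0, 0, 0, 0, 0; 0, 0, 0, 0, 0; 0, 0, 0, 0, 0],
    !![0, 0, 0, 1, 0; 0, 0, 0, 0, 0; 0, 0, 0, 0, 1; -1, 0, 0, 0, 0; 0, 0, -1, 0, 0]]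

lemma linearIndependent_of_gram {ι κ : Type*} [Fintype ι] {A : κ → V →ₗ[F] V →ₗ[F] F}
    {C : κ → Matrix ι ι F} {e : ι → V} (he : ∀ k i j, A k (e i) (e j) = C k i j)
    (hC : ∀ c : ι → F, (∀ k j, ∑ i, c i * C k i j = 0) → c = 0) : LinearIndependent F e := by
  refine Fintype.linearIndependent_iff.mpr fun c hc ↦ congrFun (hC c fun k j ↦ ?_)
  have hcj : A k (∑ i, c i • e i) (e j) = 0 := by simp [hc]
  simpa [he] using hcj

lemma eq_zero_of_sum_mul_structureConstantsL1 {c : Fin 5 → F}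
    (hc : ∀ k j, ∑ i, c i * structureConstantsL1 F k i j = 0) : c = 0 := by
  simp only [structureConstantsL1, Fin.sum_univ_five] at hc
  have h0 : c 0 = 0 := by simpa using hc 0 1
  have h1 : c 1 = 0 := by simpa using hc 0 0
  have h2 : c 2 = 0 := by simpa using hc 0 3
  have h3 : c 3 = 0 := by simpa using hc 0 2
  have h4 : c 4 = 0 := by simpa using hc 1 0
  ext i
  fin_cases i <;> assumption

lemma eq_zero_of_sum_mul_structureConstantsL2 {c : Fin 5 → F}
    (hc : ∀ k j, ∑ i, c i * structureConstantsL2 F k i j = 0) : c = 0 := by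
  simp only [structureConstantsL2, Fin.sum_univ_five] at hc
  have h0 : c 0 = 0 := by simpa using hc 0 1
  have h1 : c 1 = 0 := by simpa using hc 0 0
  have h2 : c 2 = 0 := by simpa using hc 1 4
  have h3 : c 3 = 0 := by simpa using hc 1 0
  have h4 : c 4 = 0 := by simpa using hc 1 2
  ext i
  fin_cases i <;> assumption

lemma structureConstantsL1_self (k : Fin 2) (i : Fin 5) : structureConstantsL1 F k i i = 0 := by
  fin_cases k <;> fin_cases i <;> rfl

lemma structureConstantsL1_swap (k : Fin 2) (i j : Fin 5) :
    structureConstantsL1 F k j i = -structureConstantsL1 F k i j := by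
  fin_cases k <;> fin_cases i <;> fin_cases j <;> simp [structureConstantsL1]

lemma structureConstantsL2_self (k : Fin 2) (i : Fin 5) : structureConstantsL2 F k i i = 0 := by
  fin_cases k <;> fin_cases i <;> rfl

lemma structureConstantsL2_swap (k : Fin 2) (i j : Fin 5) :
    structureConstantsL2 F k j i = -structureConstantsL2 F k i j := by
  fin_cases k <;> fin_cases i <;> fin_cases j <;> simp [structureConstantsL2]

lemma gram_eq_of_gram_eq_of_lt {ι : Type*} [LinearOrder ι] {A : V →ₗ[F] V →ₗ[F] F} (hA : A.IsAlt)
    {M : Matrix ι ι F} (hself : ∀ i, M i i = 0) (hswap : ∀ i j, M j i = -M i j) {e : ι → V}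
    (he : ∀ i j, i < j → A (e i) (e j) = M i j) (i j : ι) : A (e i) (e j) = M i j := by
  obtain hij | rfl | hij := lt_trichotomy i j
  · exact he i j hij
  · rw [hself, hA.self_eq_zero]
  · rw [← hA.neg, he j i hij, hswap i j, neg_neg]

lemma linearIndependent_of_apply_eq {A B : V →ₗ[F] V →ₗ[F] F} {u w z : V}
    (hAu : A u = 0) (hz : A z = B u) (hli : LinearIndependent F ![B u, A w]) :
    LinearIndependent F ![u, w, z] := by
  have hu : u ≠ 0 := by
    rintro rfl
    exact hli.ne_zero 0 (map_zero B)
  rw [LinearIndependent.pair_iff] at hli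
  refine Fintype.linearIndependent_iff.mpr fun g hg ↦ ?_
  rw [Fin.sum_univ_three] at hg
  have hAg : g 2 • B u + g 1 • A w = 0 := by simpa [hAu, hz, add_comm] using congrArg A hg
  obtain ⟨h2, h1⟩ := hli _ _ hAg
  have h0 : g 0 = 0 := by simpa [h1, h2, hu] using hg
  intro i
  fin_cases i <;> assumption

section NormalForms

variable [FiniteDimensional F V]

lemma exists_basis_gram_eq {ι κ : Type*} [Fintype ι] [LinearOrder ι]
    {A : κ → V →ₗ[F] V →ₗ[F] F} (hA : ∀ k, (A k).IsAlt) {C : κ → Matrix ι ι F}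
    (hself : ∀ k i, C k i i = 0) (hswap : ∀ k i j, C k j i = -C k i j)
    (hC : ∀ c : ι → F, (∀ k j, ∑ i, c i * C k i j = 0) → c = 0)
    (hV : finrank F V = Fintype.card ι) {e : ι → V}
    (he : ∀ k i j, i < j → A k (e i) (e j) = C k i j) :
    ∃ b : Basis ι F V, ∀ k i j, A k (b i) (b j) = C k i j := by
  have hgram k := gram_eq_of_gram_eq_of_lt (hA k) (hself k) (hswap k) (he k)
  exact ⟨basisOfLinearIndependentOfCardEqFinrank' e (linearIndependent_of_gram hgram hC) hV.symm,
    by simpa using hgram⟩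

lemma exists_hyperbolic_pairs_of_finrank_ker_eq_three {A B : V →ₗ[F] V →ₗ[F] F} (hB : B.IsAlt)
    (hV : finrank F V = 5) (hAB : ker A ⊓ ker B = ⊥) (hkA : finrank F (ker A) = 3) :
    ∃ e₁ e₃ w e₅, A e₃ = 0 ∧ A w = 0 ∧ A e₅ = 0 ∧ B e₃ e₅ = 1 ∧ B e₁ w = 1 ∧
      B e₁ e₃ = 0 ∧ B e₁ e₅ = 0 ∧ ∀ x, A x = 0 → B w x = 0 := by
  have hBK : B.domRestrict₁₂ (ker A) (ker A) ≠ 0 := fun h0 ↦ by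
    have hle := two_mul_finrank_le_of_isotropic (A := B) (U := ker A)
      fun x hx y hy ↦ LinearMap.congr_fun₂ h0 ⟨x, hx⟩ ⟨y, hy⟩
    rw [hAB, finrank_bot] at hle
    lia
  obtain ⟨⟨e₃, hAe₃⟩, ⟨e₅, hAe₅⟩, hBe₃e₅⟩ := exists_apply_apply_eq_one hBK
  obtain ⟨⟨w, hAw⟩, hw, hBwK⟩ := exists_ne_zero_apply_eq_zero_of_odd_finrank
    (A := B.domRestrict₁₂ (ker A) (ker A)) (fun x ↦ hB x) (by rw [hkA]; decide)
  replace hBe₃e₅ : B e₃ e₅ = 1 := hBe₃e₅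
  replace hBwK (x : V) (hx : A x = 0) : B w x = 0 := LinearMap.congr_fun hBwK ⟨x, hx⟩
  have hBw : B w ≠ 0 := fun h0 ↦ hw <| Subtype.ext <| (Submodule.mem_bot F).mp (hAB ▸ ⟨hAw, h0⟩)
  obtain ⟨x, hx⟩ := LinearMap.surjective hBw (-1)
  obtain ⟨s, t, h3, h5⟩ := exists_orthogonal_add_smul_add_smul hB hBe₃e₅ x
  refine ⟨x + s • e₃ + t • e₅, e₃, w, e₅, hAe₃, hAw, hAe₅, hBe₃e₅, ?_, h3, h5, hBwK⟩
  rw [← hB.neg]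
  simp [hx, hBwK _ hAe₃, hBwK _ hAe₅]

lemma exists_basis_gram_eq_structureConstantsL2 {A B : V →ₗ[F] V →ₗ[F] F} (hA : A.IsAlt)
    (hB : B.IsAlt) (hV : finrank F V = 5) (hAB : ker A ⊓ ker B = ⊥)
    (hkA : finrank F (ker A) = 3) :
    ∃ e : Basis (Fin 5) F V, ∀ k i j, ![A, B] k (e i) (e j) = structureConstantsL2 F k i j := by
  obtain ⟨e₁, e₃, w, e₅, hAe₃, hAw, hAe₅, hBe₃e₅, hBe₁w, hBe₁e₃, hBe₁e₅, hBw⟩ :=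
    exists_hyperbolic_pairs_of_finrank_ker_eq_three hB hV hAB hkA
  have hA_right {z : V} (hz : A z = 0) (v : V) : A v z = 0 := by simp [hA.eq_iff (y := z), hz]
  have hBe₃w : B e₃ w = 0 := hB.eq_iff.mp (hBw e₃ hAe₃)
  have hAe₁ : A e₁ ≠ 0 := fun h0 ↦ by simp [hB.eq_iff.mp (hBw e₁ h0)] at hBe₁w
  obtain ⟨y, hye₃, hye₅, hAe₁y⟩ : ∃ y, B y e₃ = 0 ∧ B y e₅ = 0 ∧ A e₁ y = 1 := by
    obtain ⟨x, hx⟩ := LinearMap.surjective hAe₁ 1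
    obtain ⟨s, t, h₃, h₅⟩ := exists_orthogonal_add_smul_add_smul hB hBe₃e₅ x
    exact ⟨_, h₃, h₅, by simp [hx, hA_right hAe₃, hA_right hAe₅]⟩
  obtain ⟨e₂, hAe₁e₂, hBe₂e₁, hBe₂w, hBe₂e₃, hBe₂e₅⟩ :
      ∃ e₂, A e₁ e₂ = 1 ∧ B e₂ e₁ = 0 ∧ B e₂ w = 0 ∧ B e₂ e₃ = 0 ∧ B e₂ e₅ = 0 := by
    obtain ⟨s, t, h₁, hw⟩ := exists_orthogonal_add_smul_add_smul hB hBe₁w y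
    exact ⟨_, by simp [hAe₁y, hA.self_eq_zero, hA_right hAw], h₁, hw,
      by simp [hye₃, hBe₁e₃, hBw e₃ hAe₃], by simp [hye₅, hBe₁e₅, hBw e₅ hAe₅]⟩
  refine exists_basis_gram_eq (e := ![e₁, e₂, e₃, w, e₅])
    (Fin.forall_fin_two.mpr ⟨hA, hB⟩) structureConstantsL2_self structureConstantsL2_swap
    (fun _ ↦ eq_zero_of_sum_mul_structureConstantsL2) (by simpa using hV)
    (Fin.forall_fin_two.mpr ⟨?_, ?_⟩)
  · simp [Fin.forall_fin_succ, structureConstantsL2, hAe₁e₂, hA_right hAe₃, hA_right hAw,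
      hA_right hAe₅]
  · simp [Fin.forall_fin_succ, structureConstantsL2, hB.eq_iff.mp hBe₂e₁, hBe₁e₃, hBe₁w, hBe₁e₅,
      hBe₂w, hBe₂e₃, hBe₂e₅, hBe₃w, hBe₃e₅, hBw e₅ hAe₅]

lemma apply_eq_zero_of_finrank_le_one {B : V →ₗ[F] V →ₗ[F] F} (hB : B.IsAlt)
    {K : Submodule F V} (hK : finrank F K ≤ 1) {x y : V} (hx : x ∈ K) (hy : y ∈ K) :
    B x y = 0 := by
  obtain ⟨v, hv⟩ := finrank_le_one_iff.mp hK
  obtain ⟨a, ha⟩ := hv ⟨x, hx⟩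
  obtain ⟨b, hb⟩ := hv ⟨y, hy⟩
  obtain rfl : a • (v : V) = x := congrArg Subtype.val ha
  obtain rfl : b • (v : V) = y := congrArg Subtype.val hb
  simp [hB.self_eq_zero]

lemma not_linearIndependent_of_forall_mem_dualAnnihilator {ι : Type*} [Fintype ι]
    {f : ι → Dual F V} {U : Submodule F V} (hf : ∀ i, f i ∈ U.dualAnnihilator)
    (hU : finrank F V < finrank F U + Fintype.card ι) : ¬ LinearIndependent F f := fun hli ↦ by
  have hle := Submodule.finrank_mono (Submodule.span_le.mpr (Set.range_subset_iff.mpr hf))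
  rw [finrank_span_eq_card hli] at hle
  have hann := Subspace.finrank_add_finrank_dualAnnihilator_eq U
  lia

section RegularPencil

variable {A B : V →ₗ[F] V →ₗ[F] F}

lemma not_linearIndependent_apply_of_smul_apply_eq (hA : A.IsAlt) (hB : B.IsAlt)
    (hV : finrank F V = 5) {x u w : V} {c : F} (hxuw : LinearIndependent F ![x, u, w])
    (hAu : A u = 0) (hBw : B w = 0) (hBux : B u x = 0) (hc : c • B u = A w) :
    ¬ LinearIndependent F ![A x, B x, B u] := by
  -- All three forms vanish on the span of `x, u, w`, whose annihilator is only two-dimensional.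
  have hAwx : A w x = 0 := by rw [← hc, LinearMap.smul_apply, hBux, smul_zero]
  have hann {f : Dual F V} (hx : f x = 0) (hu : f u = 0) (hw : f w = 0) :
      f ∈ (Submodule.span F (Set.range ![x, u, w])).dualAnnihilator := by
    have hle : Submodule.span F (Set.range ![x, u, w]) ≤ ker f := by
      simp [Submodule.span_le, Set.insert_subset_iff, hx, hu, hw]
    exact (Submodule.mem_dualAnnihilator f).mpr fun v hv ↦ hle hv
  have hAx := hann (hA x) (by simp [hA.eq_iff (x := x), hAu]) (hA.eq_iff.mp hAwx)
  have hBx := hann (hB x) (hB.eq_iff.mp hBux) (by simp [hB.eq_iff (x := x), hBw])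
  have hBu := hann hBux (hB u) (by simp [hB.eq_iff (x := u), hBw])
  refine not_linearIndependent_of_forall_mem_dualAnnihilator
    (U := Submodule.span F (Set.range ![x, u, w])) (fun i ↦ ?_) ?_
  · fin_cases i
    exacts [hAx, hBx, hBu]
  · rw [finrank_span_eq_card hxuw, hV, Fintype.card_fin]
    lia

lemma one_lt_finrank_ker_of_apply_mem_span_singleton {C : V →ₗ[F] W} {x u w : V} {f : W}
    (hxuw : LinearIndependent F ![x, u, w]) (hx : C x ∈ Submodule.span F {f})
    (hu : C u ∈ Submodule.span F {f}) (hw : C w ∈ Submodule.span F {f}) :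
    1 < finrank F (ker C) := by
  have hmap : (Submodule.span F (Set.range ![x, u, w])).map C ≤ Submodule.span F {f} := by
    rw [Submodule.map_span_le]
    rintro _ ⟨i, rfl⟩
    fin_cases i
    exacts [hx, hu, hw]
  have hrank := (Submodule.finrank_mono hmap).trans (finrank_span_le_card {f})
  have hinf := finrank_map_add_finrank_inf_ker C (Submodule.span F (Set.range ![x, u, w]))
  rw [finrank_span_eq_card hxuw, Fintype.card_fin] at hinf
  have hker := Submodule.finrank_mono
    (inf_le_right : Submodule.span F (Set.range ![x, u, w]) ⊓ ker C ≤ ker C)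
  rw [Set.toFinset_singleton, Finset.card_singleton] at hrank
  lia

lemma linearIndependent_apply_apply_of_finrank_ker_le_one (hA : A.IsAlt) (hB : B.IsAlt)
    (hV : finrank F V = 5) (hreg : ∀ a b : F, (a, b) ≠ 0 → finrank F (ker (a • A + b • B)) ≤ 1)
    {u w : V} (hAu : A u = 0) (hBw : B w = 0) (hBu : B u ≠ 0) (hAw : A w ≠ 0) :
    LinearIndependent F ![B u, A w] := by
  refine (LinearIndependent.pair_iff' hBu).mpr fun c hc ↦ ?_
  have huw : LinearIndependent F ![u, w] :=
    (LinearIndependent.pair_iff' (by rintro rfl; simp at hBu)).mpr fun a ha ↦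
      hAw (by rw [← ha, map_smul, hAu, smul_zero])
  obtain ⟨x, hBux, hx⟩ : ∃ x ∈ ker (B u), x ∉ Submodule.span F (Set.range ![u, w]) := by
    refine SetLike.not_le_iff_exists.mp fun hle ↦ ?_
    have hle := Submodule.finrank_mono hle
    rw [finrank_span_eq_card huw, Fintype.card_fin] at hle
    have hker := Dual.finrank_ker_add_one_of_ne_zero hBu
    lia
  have hxuw : LinearIndependent F ![x, u, w] := linearIndependent_finCons.mpr ⟨huw, hx⟩
  obtain ⟨g, hg, hg0⟩ := Fintype.not_linearIndependent_iff.mp <|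
    not_linearIndependent_apply_of_smul_apply_eq hA hB hV hxuw hAu hBw hBux hc
  rw [Fin.sum_univ_three] at hg
  have hab : (g 0, g 1) ≠ 0 := fun h0 ↦ by
    obtain ⟨h0, h1⟩ := Prod.mk_eq_zero.mp h0
    have h2 : g 2 = 0 := by simpa [h0, h1, hBu] using hg
    obtain ⟨i, hi⟩ := hg0
    fin_cases i <;> contradiction
  refine (hreg _ _ hab).not_gt (one_lt_finrank_ker_of_apply_mem_span_singleton (f := B u) hxuw
    (Submodule.mem_span_singleton.mpr ⟨-g 2, ?_⟩) (Submodule.mem_span_singleton.mpr ⟨g 1, ?_⟩)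
    (Submodule.mem_span_singleton.mpr ⟨g 0 * c, ?_⟩))
  · simpa [neg_eq_iff_add_eq_zero, add_comm] using hg
  · simp [hAu]
  · simp [hBw, ← hc, mul_smul]

lemma mem_span_range_of_apply_eq (hA : A.IsAlt) (hB : B.IsAlt) (hV : finrank F V = 5)
    {u w z z' : V} (hAu : A u = 0) (hBw : B w = 0) (hz : A z = B u) (hz' : B z' = A w)
    (hli : LinearIndependent F ![B u, A w]) :
    z' ∈ Submodule.span F (Set.range ![u, w, z]) := by
  obtain ⟨S, hS⟩ : ∃ S, S = (Submodule.span F (Set.range ![B u, A w])).dualCoannihilator :=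
    ⟨_, rfl⟩
  have hmemS (x : V) : x ∈ S ↔ B u x = 0 ∧ A w x = 0 := by
    rw [← SetLike.mem_coe, hS, Submodule.coe_dualCoannihilator_span]
    simp [and_comm]
  have hdimS : finrank F S = 3 := by
    have hann := Subspace.finrank_add_finrank_dualCoannihilator_eq
      (Submodule.span F (Set.range ![B u, A w]))
    rw [← hS, finrank_span_eq_card hli, Fintype.card_fin] at hann
    lia
  have hu : u ∈ S := (hmemS u).mpr ⟨hB u, by rw [hA.eq_iff, hAu, LinearMap.zero_apply]⟩
  have hw : w ∈ S := (hmemS w).mpr ⟨by rw [hB.eq_iff, hBw, LinearMap.zero_apply], hA w⟩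
  have hzS : z ∈ S := (hmemS z).mpr
    ⟨by rw [← hz, hA.self_eq_zero], by rw [hA.eq_iff, hz, hB.eq_iff, hBw, LinearMap.zero_apply]⟩
  have hle : Submodule.span F (Set.range ![u, w, z]) ≤ S := by
    rw [Submodule.span_le, Set.range_subset_iff]
    intro i
    fin_cases i
    exacts [hu, hw, hzS]
  have hspan : Submodule.span F (Set.range ![u, w, z]) = S := by
    refine Submodule.eq_of_le_of_finrank_eq hle ?_
    rw [hdimS, finrank_span_eq_card (linearIndependent_of_apply_eq hAu hz hli), Fintype.card_fin]
  rw [hspan, hmemS]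
  constructor
  · rw [hB.eq_iff, hz', hA.eq_iff, hAu, LinearMap.zero_apply]
  · rw [← hz', hB.self_eq_zero]

lemma exists_kronecker_chain (hA : A.IsAlt) (hB : B.IsAlt) (hV : finrank F V = 5)
    (hAB : ker A ⊓ ker B = ⊥)
    (hreg : ∀ a b : F, (a, b) ≠ 0 → finrank F (ker (a • A + b • B)) ≤ 1) :
    ∃ u z w, A u = 0 ∧ A z = B u ∧ B z = A w ∧ B w = 0 ∧ LinearIndependent F ![B u, A w] := by
  have hodd : Odd (finrank F V) := by rw [hV]; decide
  obtain ⟨u, hu, hAu⟩ := exists_ne_zero_apply_eq_zero_of_odd_finrank hA hodd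
  obtain ⟨w, hw, hBw⟩ := exists_ne_zero_apply_eq_zero_of_odd_finrank hB hodd
  have hAker : finrank F (ker A) ≤ 1 := by
    have h := hreg 1 0 (by simp)
    rwa [one_smul, zero_smul, add_zero] at h
  have hBker : finrank F (ker B) ≤ 1 := by
    have h := hreg 0 1 (by simp)
    rwa [one_smul, zero_smul, zero_add] at h
  have hBu : B u ≠ 0 := fun h0 ↦ hu ((Submodule.mem_bot F).mp (hAB ▸ ⟨hAu, h0⟩))
  have hAw : A w ≠ 0 := fun h0 ↦ hw ((Submodule.mem_bot F).mp (hAB ▸ ⟨h0, hBw⟩))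
  obtain ⟨z₁, hz₁⟩ := exists_apply_eq_of_ker_le_ker (f := B u) hA
    fun y hy ↦ apply_eq_zero_of_finrank_le_one hB hAker hAu hy
  obtain ⟨z₂, hz₂⟩ := exists_apply_eq_of_ker_le_ker (f := A w) hB
    fun y hy ↦ apply_eq_zero_of_finrank_le_one hA hBker hBw hy
  have hli := linearIndependent_apply_apply_of_finrank_ker_le_one hA hB hV hreg hAu hBw hBu hAw
  obtain ⟨c, hc⟩ := (Submodule.mem_span_range_iff_exists_fun F).mp
    (mem_span_range_of_apply_eq hA hB hV hAu hBw hz₁ hz₂ hli)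
  have hBz : B (c 0 • u + c 2 • z₁) = A w := by
    rw [← hz₂, ← hc]
    simp [hBw, Fin.sum_univ_three]
  have hc2 : c 2 ≠ 0 := fun h0 ↦
    (LinearIndependent.pair_iff' hBu).mp hli (c 0) (by simpa [h0] using hBz)
  refine ⟨c 2 • u, c 0 • u + c 2 • z₁, w, by simp [hAu], by simp [hAu, hz₁], hBz, hBw, ?_⟩
  exact linearIndependent_apply_apply_of_finrank_ker_le_one hA hB hV hreg (by simp [hAu]) hBw
    (by simp [hc2, hBu]) hAw

lemma exists_basis_gram_eq_structureConstantsL1 (hA : A.IsAlt) (hB : B.IsAlt)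
    (hV : finrank F V = 5) (hAB : ker A ⊓ ker B = ⊥)
    (hreg : ∀ a b : F, (a, b) ≠ 0 → finrank F (ker (a • A + b • B)) ≤ 1) :
    ∃ e : Basis (Fin 5) F V, ∀ k i j, ![A, B] k (e i) (e j) = structureConstantsL1 F k i j := by
  obtain ⟨u, z, w, hAu, hAz, hBz, hBw, hli⟩ := exists_kronecker_chain hA hB hV hAB hreg
  have hA_right (v : V) : A v u = 0 := by simp [hA.eq_iff (y := u), hAu]
  have hB_right (v : V) : B v w = 0 := by simp [hB.eq_iff (y := w), hBw]
  obtain ⟨x₁, hx₁⟩ := exists_forall_apply_eq_of_linearIndependent hli ![-1, 0]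
  obtain ⟨x₃, hx₃⟩ := exists_forall_apply_eq_of_linearIndependent hli ![0, 1]
  obtain ⟨hBux₁, hAwx₁⟩ : B u x₁ = -1 ∧ A w x₁ = 0 := by simpa [Fin.forall_fin_two] using hx₁
  obtain ⟨hBux₃, hAwx₃⟩ : B u x₃ = 0 ∧ A w x₃ = 1 := by simpa [Fin.forall_fin_two] using hx₃
  have hAx₁z : A x₁ z = 1 := by rw [← hA.neg, hAz, hBux₁, neg_neg]
  have hBx₁u : B x₁ u = 1 := by rw [← hB.neg, hBux₁, neg_neg]
  have hBx₁z : B x₁ z = 0 := by rw [hB.eq_iff, hBz, hAwx₁]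
  have hAx₁w : A x₁ w = 0 := by rw [hA.eq_iff, hAwx₁]
  have hAx₃w : A x₃ w = -1 := by rw [← hA.neg, hAwx₃]
  have hBx₃u : B x₃ u = 0 := by rw [hB.eq_iff, hBux₃]
  have hBuz : B u z = 0 := by rw [← hAz, hA.self_eq_zero]
  have hBuu : B u u = 0 := hB u
  have hAwz : A w z = 0 := by rw [← hBz, hB.self_eq_zero]
  -- Since `A x₁ z = B x₁ u = 1`, the correction of `x₃` makes it orthogonal to `x₁` for both forms.
  refine exists_basis_gram_eq (e := ![x₁, z, x₃ - A x₁ x₃ • z - B x₁ x₃ • u, -w, u])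
    (Fin.forall_fin_two.mpr ⟨hA, hB⟩) structureConstantsL1_self structureConstantsL1_swap
    (fun _ ↦ eq_zero_of_sum_mul_structureConstantsL1) (by simpa using hV)
    (Fin.forall_fin_two.mpr ⟨?_, ?_⟩)
  · simp [Fin.forall_fin_succ, structureConstantsL1, *]
  · simp [Fin.forall_fin_succ, structureConstantsL1, *]

end RegularPencil

end NormalForms

section AlternatingMap

variable {β : V →ₗ[F] V →ₗ[F] W}

/-- The alternating map `β` is given by `β (e i) (e j) = ∑ k, C k i j • ζ k`: when `β` is a Lie
bracket, the entries of `C` are its structure constants. -/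
def HasStructureConstants {ι κ : Type*} [Fintype κ] (β : V →ₗ[F] V →ₗ[F] W) (e : ι → V)
    (ζ : κ → W) (C : κ → Matrix ι ι F) : Prop :=
  ∀ i j, β (e i) (e j) = ∑ k, C k i j • ζ k

lemma hasStructureConstants_of_coord_eq {ι κ : Type*} [Fintype κ] {e : ι → V} {ζ : Basis κ F W}
    {C : κ → Matrix ι ι F} (h : ∀ k i j, ζ.coord k (β (e i) (e j)) = C k i j) :
    HasStructureConstants β e ζ C := fun i j ↦ by
  simp_rw [← h, Basis.coord_apply, ζ.sum_repr]

lemma ker_compr₂_coord_inf_ker_compr₂_coord_eq_bot (hβ : ker β = ⊥) (ζ : Basis (Fin 2) F W) :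
    ker (β.compr₂ (ζ.coord 0)) ⊓ ker (β.compr₂ (ζ.coord 1)) = ⊥ := by
  refine (Submodule.eq_bot_iff _).mpr fun x ⟨h0, h1⟩ ↦ (LinearMap.ker_eq_bot'.mp hβ) x ?_
  ext y
  refine ζ.ext_elem fun k ↦ ?_
  fin_cases k
  · simpa using LinearMap.congr_fun h0 y
  · simpa using LinearMap.congr_fun h1 y

lemma finrank_ker_eq_three_of_one_lt [FiniteDimensional F V] {A : V →ₗ[F] V →ₗ[F] F}
    (hA : A.IsAlt) (hA0 : A ≠ 0) (hV : finrank F V = 5) (hker : 1 < finrank F (ker A)) :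
    finrank F (ker A) = 3 := by
  obtain ⟨r, hr⟩ := even_finrank_range_of_isAlt hA
  have hrank := A.finrank_range_add_finrank_ker
  have hr0 : finrank F (range A) ≠ 0 := fun h0 ↦
    hA0 (LinearMap.range_eq_bot.mp (Submodule.finrank_eq_zero.mp h0))
  lia

lemma exists_hasStructureConstants [FiniteDimensional F V] [FiniteDimensional F W]
    (hβ : β.IsAlt) (hker : ker β = ⊥) (hdual : ∀ φ : Dual F W, β.compr₂ φ = 0 → φ = 0)
    (hV : finrank F V = 5) (hW : finrank F W = 2) :
    ∃ (e : Basis (Fin 5) F V) (ζ : Basis (Fin 2) F W),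
      HasStructureConstants β e ζ (structureConstantsL1 F) ∨
        HasStructureConstants β e ζ (structureConstantsL2 F) := by
  have halt (φ : Dual F W) : (β.compr₂ φ).IsAlt := fun x ↦ by simp [hβ.self_eq_zero]
  by_cases hdeg : ∃ φ : Dual F W, φ ≠ 0 ∧ 1 < finrank F (ker (β.compr₂ φ))
  · obtain ⟨φ, hφ, hrank⟩ := hdeg
    obtain ⟨ζ, rfl⟩ := exists_basis_coord_zero_eq hφ hW
    obtain ⟨e, he⟩ := exists_basis_gram_eq_structureConstantsL2 (halt _) (halt _) hV
      (ker_compr₂_coord_inf_ker_compr₂_coord_eq_bot hker ζ)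
      (finrank_ker_eq_three_of_one_lt (halt _) (mt (hdual _) hφ) hV hrank)
    exact ⟨e, ζ, .inr <| hasStructureConstants_of_coord_eq <|
      Fin.forall_fin_two.mpr ⟨he 0, he 1⟩⟩
  · push Not at hdeg
    let ζ := finBasisOfFinrankEq F W hW
    have hreg (a b : F) (hab : (a, b) ≠ 0) :
        finrank F (ker (a • β.compr₂ (ζ.coord 0) + b • β.compr₂ (ζ.coord 1))) ≤ 1 := by
      have hφ : a • ζ.coord 0 + b • ζ.coord 1 ≠ 0 := fun h0 ↦ hab <| Prod.ext
        (by simpa using LinearMap.congr_fun h0 (ζ 0)) (by simpa using LinearMap.congr_fun h0 (ζ 1))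
      have hcompr : a • β.compr₂ (ζ.coord 0) + b • β.compr₂ (ζ.coord 1) =
          β.compr₂ (a • ζ.coord 0 + b • ζ.coord 1) := by
        ext
        simp
      rw [hcompr]
      exact hdeg _ hφ
    obtain ⟨e, he⟩ := exists_basis_gram_eq_structureConstantsL1 (halt _) (halt _) hV
      (ker_compr₂_coord_inf_ker_compr₂_coord_eq_bot hker ζ) hreg
    exact ⟨e, ζ, .inl <| hasStructureConstants_of_coord_eq <|
      Fin.forall_fin_two.mpr ⟨he 0, he 1⟩⟩

lemma eq_zero_of_domRestrict₁₂_eq_zero (hβ : β.IsAlt) {U K : Submodule F V}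
    (hUK : Codisjoint U K) (hK : K ≤ ker β) (h : β.domRestrict₁₂ U U = 0) : β = 0 := by
  ext x y
  obtain ⟨u, k, hu, hk, rfl⟩ := Submodule.codisjoint_iff_exists_add_eq.mp hUK x
  obtain ⟨u', k', hu', hk', rfl⟩ := Submodule.codisjoint_iff_exists_add_eq.mp hUK y
  have huu' : β u u' = 0 := LinearMap.congr_fun₂ h ⟨u, hu⟩ ⟨u', hu'⟩
  have hk0 : β k = 0 := hK hk
  have hk0' : β u k' = 0 := by rw [hβ.eq_iff, LinearMap.mem_ker.mp (hK hk'), LinearMap.zero_apply]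
  simp [huu', hk0, hk0']

lemma ker_domRestrict₁₂_eq_bot_of_isCompl (hβ : β.IsAlt) {U : Submodule F V}
    (hU : IsCompl U (ker β)) : ker (β.domRestrict₁₂ U U) = ⊥ := by
  refine LinearMap.ker_eq_bot'.mpr fun ⟨x, hx⟩ hx0 ↦ ?_
  have hxker : x ∈ ker β := by
    ext y
    obtain ⟨u, k, hu, hk, rfl⟩ := Submodule.codisjoint_iff_exists_add_eq.mp hU.codisjoint y
    have hxu : β x u = 0 := LinearMap.congr_fun hx0 ⟨u, hu⟩
    have hxk : β x k = 0 := by rw [hβ.eq_iff, LinearMap.mem_ker.mp hk, LinearMap.zero_apply]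
    simp [hxu, hxk]
  exact Subtype.ext (Submodule.disjoint_def.mp hU.disjoint x hx hxker)

lemma exists_hasStructureConstants_domRestrict₁₂ [FiniteDimensional F V] [FiniteDimensional F W]
    (hβ : β.IsAlt) (hdual : ∀ φ : Dual F W, β.compr₂ φ = 0 → φ = 0) {U : Submodule F V}
    (hU : IsCompl U (ker β)) (hdimU : finrank F U = 5) (hW : finrank F W = 2) :
    ∃ (e : Basis (Fin 5) F U) (ζ : Basis (Fin 2) F W),
      HasStructureConstants (β.domRestrict₁₂ U U) e ζ (structureConstantsL1 F) ∨
        HasStructureConstants (β.domRestrict₁₂ U U) e ζ (structureConstantsL2 F) := by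
  have halt : (β.domRestrict₁₂ U U).IsAlt := fun x ↦ hβ x
  have hbot := ker_domRestrict₁₂_eq_bot_of_isCompl hβ hU
  refine exists_hasStructureConstants halt hbot (fun φ hφ ↦ hdual φ ?_) hdimU hW
  have haltφ : (β.compr₂ φ).IsAlt := fun x ↦ by simp [hβ.self_eq_zero]
  have hker : ker β ≤ ker (β.compr₂ φ) := LinearMap.ker_le_ker_comp β (φ.compRight F)
  exact eq_zero_of_domRestrict₁₂_eq_zero haltφ hU.codisjoint hker hφ

end AlternatingMap

section LieAlgebra

variable {L : Type*} [LieRing L] [LieAlgebra F L]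

/-- The Lie bracket of `L` as a bilinear map with values in the derived subalgebra `[L, L]`,
encoded as the first term of the lower central series. -/
def bracketToDerived (F L : Type*) [Field F] [LieRing L] [LieAlgebra F L] :
    L →ₗ[F] L →ₗ[F] LieModule.lowerCentralSeries F L L 1 :=
  LinearMap.mk₂ F
    (fun x y ↦ ⟨⁅x, y⁆, LieSubmodule.lie_mem_lie (LieSubmodule.mem_top x) (LieSubmodule.mem_top y)⟩)
    (fun _ _ _ ↦ Subtype.ext (add_lie _ _ _)) (fun _ _ _ ↦ Subtype.ext (smul_lie _ _ _))
    (fun _ _ _ ↦ Subtype.ext (lie_add _ _ _)) (fun _ _ _ ↦ Subtype.ext (lie_smul _ _ _))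

lemma coe_bracketToDerived (x y : L) : (bracketToDerived F L x y : L) = ⁅x, y⁆ := rfl

lemma isAlt_bracketToDerived : (bracketToDerived F L).IsAlt := fun x ↦ Subtype.ext (lie_self x)

lemma ker_bracketToDerived : ker (bracketToDerived F L) = (LieAlgebra.center F L).toSubmodule := by
  ext x
  have hcomm (y : L) : ⁅x, y⁆ = 0 ↔ ⁅y, x⁆ = 0 := by rw [← lie_skew, neg_eq_zero]
  simp [LinearMap.ext_iff, Subtype.ext_iff, coe_bracketToDerived, hcomm]

lemma span_range_bracketToDerived :
    Submodule.span F (Set.range fun p : L × L ↦ bracketToDerived F L p.1 p.2) = ⊤ := by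
  have hspan : (LieModule.lowerCentralSeries F L L 1).toSubmodule =
      Submodule.span F (Set.range fun p : L × L ↦ ⁅p.1, p.2⁆) := by
    rw [LieModule.lowerCentralSeries_succ, LieModule.lowerCentralSeries_zero,
      LieSubmodule.lieIdeal_oper_eq_linear_span']
    congr 1
    ext
    simp
  refine Submodule.map_injective_of_injective (Submodule.injective_subtype _) ?_
  rw [Submodule.map_span, Submodule.map_subtype_top, ← Set.range_comp]
  exact hspan.symm

lemma eq_zero_of_bracketToDerived_compr₂_eq_zero {φ : Dual F (LieModule.lowerCentralSeries F L L 1)}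
    (hφ : (bracketToDerived F L).compr₂ φ = 0) : φ = 0 :=
  LinearMap.ext_on_range span_range_bracketToDerived fun p ↦ LinearMap.congr_fun₂ hφ p.1 p.2

lemma exists_basis_lie_eq_of_hasStructureConstants {m n : ℕ} {U : Submodule F L}
    (hU : IsCompl U (LieModule.lowerCentralSeries F L L 1).toSubmodule)
    (hcenter : LieModule.lowerCentralSeries F L L 1 ≤ LieAlgebra.center F L)
    {e : Basis (Fin m) F U} {ζ : Basis (Fin n) F (LieModule.lowerCentralSeries F L L 1)}
    {C : Fin n → Matrix (Fin m) (Fin m) F}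
    (h : HasStructureConstants ((bracketToDerived F L).domRestrict₁₂ U U) e ζ C) :
    ∃ b : Basis (Fin (m + n)) F L,
      (∀ i j, ⁅b (Fin.castAdd n i), b (Fin.castAdd n j)⁆ = ∑ k, C k i j • b (Fin.natAdd m k)) ∧
        ∀ (x : L) k, ⁅x, b (Fin.natAdd m k)⁆ = 0 := by
  obtain ⟨b, hbe, hbζ⟩ := exists_basis_of_isCompl hU e ζ
  refine ⟨b, fun i j ↦ ?_, fun x k ↦ ?_⟩
  · have hij : ⁅(e i : L), (e j : L)⁆ = ∑ k, C k i j • (ζ k : L) :=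
      (congrArg Subtype.val (h i j)).trans (by simp)
    simpa [hbe, hbζ] using hij
  · rw [hbζ]
    exact (LieModule.mem_maxTrivSubmodule F L L _).mp (hcenter (ζ k).2) x

end LieAlgebra

lemma isL1_of_lie_eq_structureConstantsL1 {F L : Type u} [Field F] [LieRing L] [LieAlgebra F L]
    {b : Basis (Fin (5 + 2)) F L}
    (hb : ∀ i j, ⁅b (Fin.castAdd 2 i), b (Fin.castAdd 2 j)⁆ =
      ∑ k, structureConstantsL1 F k i j • b (Fin.natAdd 5 k))
    (hcenter : ∀ (x : L) k, ⁅x, b (Fin.natAdd 5 k)⁆ = 0) : IsL1 F L := by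
  refine ⟨b, (hb 0 1).trans ?_, (hb 2 3).trans ?_, (hb 0 4).trans ?_, (hb 1 2).trans ?_, ?_⟩
  iterate 4 simp [structureConstantsL1]
  intro i j hij h01 h23 h04 h12
  induction j using Fin.addCases (m := 5) (n := 2) with
  | right k => exact hcenter _ k
  | left j =>
    induction i using Fin.addCases (m := 5) (n := 2) with
    | right k => rw [← lie_skew, hcenter, neg_zero]
    | left i =>
      rw [hb]
      fin_cases i <;> fin_cases j <;> simp_all [structureConstantsL1]

lemma isL2_of_lie_eq_structureConstantsL2 {F L : Type u} [Field F] [LieRing L] [LieAlgebra F L]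
    {b : Basis (Fin (5 + 2)) F L}
    (hb : ∀ i j, ⁅b (Fin.castAdd 2 i), b (Fin.castAdd 2 j)⁆ =
      ∑ k, structureConstantsL2 F k i j • b (Fin.natAdd 5 k))
    (hcenter : ∀ (x : L) k, ⁅x, b (Fin.natAdd 5 k)⁆ = 0) : IsL2 F L := by
  refine ⟨b, (hb 0 1).trans ?_, (hb 0 3).trans ?_, (hb 2 4).trans ?_, ?_⟩
  iterate 3 simp [structureConstantsL2]
  intro i j hij h01 h03 h24
  induction j using Fin.addCases (m := 5) (n := 2) with
  | right k => exact hcenter _ k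
  | left j =>
    induction i using Fin.addCases (m := 5) (n := 2) with
    | right k => rw [← lie_skew, hcenter, neg_zero]
    | left i =>
      rw [hb]
      fin_cases i <;> fin_cases j <;> simp_all [structureConstantsL2]

/-- A 7-dimensional generalized Heisenberg Lie algebra of rank 2 over an arbitrary field
is isomorphic to `L₁` or `L₂`. -/
theorem gen_heisenberg_rank_two_dim_seven
    (F L : Type u) [Field F] [LieRing L] [LieAlgebra F L] [FiniteDimensional F L]
    (hdim : finrank F L = 7)
    (hgh : LieModule.lowerCentralSeries F L L 1 = LieAlgebra.center F L)
    (hder : finrank F ↥(LieModule.lowerCentralSeries F L L 1) = 2) :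
    IsL1 F L ∨ IsL2 F L := by
  obtain ⟨U, hU⟩ := Submodule.exists_isCompl (LieModule.lowerCentralSeries F L L 1).toSubmodule
  have hker : ker (bracketToDerived F L) = (LieModule.lowerCentralSeries F L L 1).toSubmodule := by
    rw [ker_bracketToDerived, hgh]
  have hdimU : finrank F U = 5 := by
    have hadd := Submodule.finrank_add_eq_of_isCompl hU
    have hder' : finrank F (LieModule.lowerCentralSeries F L L 1).toSubmodule = 2 := hder
    lia
  obtain ⟨e, ζ, h | h⟩ := exists_hasStructureConstants_domRestrict₁₂ isAlt_bracketToDerived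
    (fun _ ↦ eq_zero_of_bracketToDerived_compr₂_eq_zero) (hker ▸ hU.symm) hdimU hder
  · obtain ⟨b, hb, hcenter⟩ := exists_basis_lie_eq_of_hasStructureConstants hU.symm hgh.le h
    exact .inl (isL1_of_lie_eq_structureConstantsL1 hb hcenter)
  · obtain ⟨b, hb, hcenter⟩ := exists_basis_lie_eq_of_hasStructureConstants hU.symm hgh.le h
    exact .inr (isL2_of_lie_eq_structureConstantsL2 hb hcenter)
end
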